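/- Suppose every ŷ₂ ∈ 𝒴₂ lies in the range of g₂ ∘ g₁, and g₂(ŷ₁) lies in the range of g₂ ∘ g₁ for every ŷ₁ ∈ 𝒴₁. Then for every D > 0, with distortion measured at the distillation point Y₂: R_{XY₂}(D;Y₂) = R_{Y₂}(D;Y₂) = R_X(D;Y₂), and moreover the cases where the cut point Y₁ differs from the distillation point are also equivalent: R_{XY₁}(D;Y₂) = R_{Y₁}(D;Y₂) = R_{Y₂}(D;Y₂). -/

import Mathlib

open scoped BigOperators

/-- Joint distribution P(a,b) = p(a)·k(a)(b) induced by a source `p` and a channel `k`,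
as a real number. -/
noncomputable def jointP {A B : Type*} [Fintype A] [Fintype B] (p : PMF A) (k : A → PMF B)
    (a : A) (b : B) : ℝ :=
  (p a * k a b).toReal

/-- Marginal distribution of the second coordinate of the joint induced by `(p, k)`. -/
noncomputable def margSnd {A B : Type*} [Fintype A] [Fintype B] (p : PMF A) (k : A → PMF B)
    (b : B) : ℝ :=
  ∑ a, jointP p k a b

/-- Mutual information I(A;B) = ∑_{a,b} P(a,b)·log(P(a,b)/(P(a)·P(b))) of the joint
induced by `(p, k)`; the convention 0·log 0 = 0 holds automatically in Lean. -/
noncomputable def mutualInfo {A B : Type*} [Fintype A] [Fintype B] (p : PMF A)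
    (k : A → PMF B) : ℝ :=
  ∑ a, ∑ b, jointP p k a b * Real.log (jointP p k a b / ((p a).toReal * margSnd p k b))

/-- Expected distortion E[d(A,B)] under the joint induced by `(p, k)`. -/
noncomputable def expDist {A B : Type*} [Fintype A] [Fintype B] (p : PMF A) (k : A → PMF B)
    (d : A → B → ℝ) : ℝ :=
  ∑ a, ∑ b, jointP p k a b * d a b

/-- Rate-distortion function: infimum of mutual information over all channels `A → PMF B`
meeting the expected-distortion constraint `≤ D`. -/
noncomputable def rate {A B : Type*} [Fintype A] [Fintype B] (p : PMF A) (d : A → B → ℝ)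
    (D : ℝ) : ℝ :=
  sInf { r : ℝ | ∃ k : A → PMF B, expDist p k d ≤ D ∧ r = mutualInfo p k }

/-- Conditional probability P(A = a | B = b) under the joint induced by `(p, k)`. -/
noncomputable def condProb {A B : Type*} [Fintype A] [Fintype B] (p : PMF A) (k : A → PMF B)
    (a : A) (b : B) : ℝ :=
  jointP p k a b / margSnd p k b

/-!
When the distortion depends on the source and the reproduction only through their images under maps
`f` and `h`, with `h` surjective, either alphabet may be replaced by its image without changing the
rate. Every equality of the theorem is an instance of these two replacements.

A reproduction is pushed forward along `h`, or back along a section of `h`; both directions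
post-process the output of the channel, so data processing bounds the mutual information in both.
On the source side, a channel from the image alphabet is precomposed with `f`, which preserves the
mutual information; conversely, a channel from the original alphabet is averaged over the fibers of
`f` with respect to the source distribution, which does not increase the mutual information by the
log-sum inequality.
-/

section LogSum

variable {ι κ : Type*} {P Q : ι → ℝ}

theorem sum_mul_log_sum_div_sum_le {s : Finset ι} (hP : ∀ i ∈ s, 0 ≤ P i)
    (hQ : ∀ i ∈ s, 0 ≤ Q i) (hPQ : ∀ i ∈ s, Q i = 0 → P i = 0) :
    (∑ i ∈ s, P i) * Real.log ((∑ i ∈ s, P i) / ∑ i ∈ s, Q i)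
      ≤ ∑ i ∈ s, P i * Real.log (P i / Q i) := by
  have mul_ratio : ∀ i ∈ s, Q i * (P i / Q i) = P i := fun i hi =>
    mul_div_cancel_of_imp' (hPQ i hi)
  rcases (Finset.sum_nonneg hQ).eq_or_lt with hsum | hsum
  · have hP_zero : ∀ i ∈ s, P i = 0 := fun i hi =>
      hPQ i hi ((Finset.sum_eq_zero_iff_of_nonneg hQ).1 hsum.symm i hi)
    rw [Finset.sum_eq_zero hP_zero, zero_mul]
    exact (Finset.sum_eq_zero fun i hi => by rw [hP_zero i hi, zero_mul]).ge
  have centerMass_ratio :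
      s.centerMass Q (fun i => P i / Q i) = (∑ i ∈ s, P i) / ∑ i ∈ s, Q i := by
    rw [Finset.centerMass, smul_eq_mul, inv_mul_eq_div]
    exact congrArg (· / _) (Finset.sum_congr rfl mul_ratio)
  have jensen := Real.convexOn_mul_log.map_centerMass_le hQ hsum
    fun i hi => Set.mem_Ici.2 (div_nonneg (hP i hi) (hQ i hi))
  rw [centerMass_ratio, Finset.centerMass, smul_eq_mul, inv_mul_eq_div, le_div_iff₀' hsum,
    ← mul_assoc, mul_div_cancel₀ _ hsum.ne'] at jensen
  refine jensen.trans_eq (Finset.sum_congr rfl fun i hi => ?_)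
  rw [smul_eq_mul, Function.comp_apply, ← mul_assoc, mul_ratio i hi]

theorem sum_fiberwise_mul_log_div_le [Fintype ι] [Fintype κ] [DecidableEq κ] (g : ι → κ)
    (hP : ∀ i, 0 ≤ P i) (hQ : ∀ i, 0 ≤ Q i) (hPQ : ∀ i, Q i = 0 → P i = 0) :
    ∑ j, (∑ i with g i = j, P i) * Real.log ((∑ i with g i = j, P i) / ∑ i with g i = j, Q i)
      ≤ ∑ i, P i * Real.log (P i / Q i) := by
  rw [← Finset.sum_fiberwise Finset.univ g]
  exact Finset.sum_le_sum fun j _ =>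
    sum_mul_log_sum_div_sum_le (fun i _ => hP i) (fun i _ => hQ i) (fun i _ => hPQ i)

end LogSum

section Channels

variable {A A' B B' : Type*}

section Pushforward

variable [Fintype A]

theorem map_apply_eq_sum_filter [DecidableEq A'] (p : PMF A) (f : A → A') (a' : A') :
    p.map f a' = ∑ a with f a = a', p a := by
  rw [PMF.map_apply, tsum_fintype, Finset.sum_filter]
  exact Finset.sum_congr rfl fun a _ => by grind

theorem toReal_map_apply [DecidableEq A'] (p : PMF A) (f : A → A') (a' : A') :
    (p.map f a').toReal = ∑ a with f a = a', (p a).toReal := by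
  rw [map_apply_eq_sum_filter, ENNReal.toReal_sum fun a _ => p.apply_ne_top a]

theorem sum_toReal_map_mul [Fintype A'] (p : PMF A) (f : A → A') (F : A' → ℝ) :
    ∑ a', (p.map f a').toReal * F a' = ∑ a, (p a).toReal * F (f a) := by
  classical
  simp only [toReal_map_apply, Finset.sum_mul]
  rw [← Finset.sum_fiberwise Finset.univ f]
  refine Finset.sum_congr rfl fun a' _ => Finset.sum_congr rfl fun a ha => ?_
  rw [(Finset.mem_filter.1 ha).2]

end Pushforward

section Joint

variable [Fintype A] [Fintype B] (p : PMF A) (k : A → PMF B)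

theorem jointP_eq_mul (a : A) (b : B) : jointP p k a b = (p a).toReal * (k a b).toReal :=
  ENNReal.toReal_mul

theorem jointP_nonneg (a : A) (b : B) : 0 ≤ jointP p k a b :=
  ENNReal.toReal_nonneg

theorem margSnd_nonneg (b : B) : 0 ≤ margSnd p k b :=
  Finset.sum_nonneg fun a _ => jointP_nonneg p k a b

theorem toReal_mul_margSnd_nonneg (a : A) (b : B) : 0 ≤ (p a).toReal * margSnd p k b :=
  mul_nonneg ENNReal.toReal_nonneg (margSnd_nonneg p k b)

variable {p k}

theorem jointP_eq_zero_of_mul_margSnd_eq_zero {a : A} {b : B}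
    (h : (p a).toReal * margSnd p k b = 0) : jointP p k a b = 0 := by
  rcases mul_eq_zero.1 h with hp | hmarg
  · rw [jointP_eq_mul, hp, zero_mul]
  · exact (Finset.sum_eq_zero_iff_of_nonneg fun a _ => jointP_nonneg p k a b).1 hmarg a
      (Finset.mem_univ a)

variable (p k)

theorem expDist_eq_sum_mul (d : A → B → ℝ) :
    expDist p k d = ∑ a, (p a).toReal * ∑ b, (k a b).toReal * d a b := by
  simp only [expDist, jointP_eq_mul, Finset.mul_sum, mul_assoc]

theorem mutualInfo_eq_sum_mul :
    mutualInfo p k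
      = ∑ a, (p a).toReal * ∑ b, (k a b).toReal * Real.log ((k a b).toReal / margSnd p k b) := by
  simp only [mutualInfo, jointP_eq_mul, Finset.mul_sum]
  refine Finset.sum_congr rfl fun a _ => Finset.sum_congr rfl fun b _ => ?_
  rcases eq_or_ne (p a).toReal 0 with hp | hp
  · simp only [hp, zero_mul]
  · rw [mul_div_mul_left _ _ hp, mul_assoc]

end Joint

section Reproduction

variable [Fintype A] [Fintype B] [Fintype B'] (p : PMF A) (k : A → PMF B) (h : B → B')

theorem jointP_map_channel [DecidableEq B'] (a : A) (b' : B') :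
    jointP p (fun a => (k a).map h) a b' = ∑ b with h b = b', jointP p k a b := by
  simp only [jointP_eq_mul, toReal_map_apply, Finset.mul_sum]

theorem margSnd_map_channel [DecidableEq B'] (b' : B') :
    margSnd p (fun a => (k a).map h) b' = ∑ b with h b = b', margSnd p k b := by
  simp only [margSnd, jointP_map_channel]
  exact Finset.sum_comm

theorem expDist_map_channel (d : A → B' → ℝ) :
    expDist p (fun a => (k a).map h) d = expDist p k fun a b => d a (h b) := by
  simp only [expDist_eq_sum_mul, sum_toReal_map_mul]

theorem mutualInfo_map_channel_le : mutualInfo p (fun a => (k a).map h) ≤ mutualInfo p k := by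
  classical
  simp only [mutualInfo, jointP_map_channel, margSnd_map_channel, Finset.mul_sum]
  exact Finset.sum_le_sum fun a _ => sum_fiberwise_mul_log_div_le h (jointP_nonneg p k a)
    (toReal_mul_margSnd_nonneg p k a) fun _ => jointP_eq_zero_of_mul_margSnd_eq_zero

end Reproduction

section Source

variable (p : PMF A) (f : A → A')

section Precomposition

variable [Fintype A] [Fintype A'] [Fintype B]

theorem margSnd_comp (k : A' → PMF B) (b : B) :
    margSnd p (k ∘ f) b = margSnd (p.map f) k b := by
  simp only [margSnd, jointP_eq_mul, sum_toReal_map_mul p f fun a' => (k a' b).toReal,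
    Function.comp_apply]

theorem expDist_comp (k : A' → PMF B) (d : A' → B → ℝ) :
    expDist p (k ∘ f) (fun a => d (f a)) = expDist (p.map f) k d := by
  simp only [expDist_eq_sum_mul, sum_toReal_map_mul, Function.comp_apply]

theorem mutualInfo_comp (k : A' → PMF B) : mutualInfo p (k ∘ f) = mutualInfo (p.map f) k := by
  simp only [mutualInfo_eq_sum_mul, sum_toReal_map_mul, margSnd_comp, Function.comp_apply]

end Precomposition

variable (k : A → PMF B)

open Classical in
/-- The conditional law of the output of `k` given the value of `f` at its input, as a channel out
of `A'`. It turns a channel for the source `p` into one for the source `p.map f`. Where conditioning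
is impossible, on values of probability zero, it is an arbitrary row of `k`. -/
noncomputable def fiberAverage (a' : A') : PMF B :=
  if ha' : ∃ a ∈ f ⁻¹' {a'}, a ∈ p.support then (p.filter (f ⁻¹' {a'}) ha').bind k
  else k p.support_nonempty.some

variable [Fintype A]

theorem map_apply_mul_fiberAverage [DecidableEq A'] (a' : A') (b : B) :
    p.map f a' * fiberAverage p f k a' b = ∑ a with f a = a', p a * k a b := by
  by_cases ha' : ∃ a ∈ f ⁻¹' {a'}, a ∈ p.support
  · have map_ne_zero : p.map f a' ≠ 0 := by
      obtain ⟨a, rfl, ha⟩ := ha'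
      exact (PMF.mem_support_map_iff f p _).2 ⟨a, ha, rfl⟩
    have tsum_indicator : ∑' a, (f ⁻¹' {a'}).indicator p a = p.map f a' := by
      rw [← PMF.toOuterMeasure_apply, ← PMF.toOuterMeasure_map_apply,
        PMF.toOuterMeasure_apply_singleton]
    have map_apply_mul_filter (a : A) :
        p.map f a' * p.filter (f ⁻¹' {a'}) ha' a = (f ⁻¹' {a'}).indicator p a := by
      rw [PMF.filter_apply, tsum_indicator, mul_left_comm,
        ENNReal.mul_inv_cancel map_ne_zero ((p.map f).apply_ne_top a'), mul_one]
    rw [fiberAverage, dif_pos ha', PMF.bind_apply, tsum_fintype, Finset.mul_sum, Finset.sum_filter]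
    refine Finset.sum_congr rfl fun a _ => ?_
    rw [← mul_assoc, map_apply_mul_filter]
    by_cases hfa : f a = a' <;> simp [hfa]
  · have eq_zero_of_mem_fiber : ∀ a ∈ Finset.univ.filter (f · = a'), p a = 0 := fun a ha =>
      by_contra fun hpa => ha' ⟨a, (Finset.mem_filter.1 ha).2, hpa⟩
    rw [map_apply_eq_sum_filter, Finset.sum_eq_zero eq_zero_of_mem_fiber, zero_mul]
    exact (Finset.sum_eq_zero fun a ha => by rw [eq_zero_of_mem_fiber a ha, zero_mul]).symm

variable [Fintype A'] [Fintype B]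

theorem jointP_fiberAverage [DecidableEq A'] (a' : A') (b : B) :
    jointP (p.map f) (fiberAverage p f k) a' b = ∑ a with f a = a', jointP p k a b := by
  rw [jointP, map_apply_mul_fiberAverage, ENNReal.toReal_sum fun a _ =>
    ENNReal.mul_ne_top (p.apply_ne_top a) ((k a).apply_ne_top b)]
  rfl

theorem margSnd_fiberAverage (b : B) :
    margSnd (p.map f) (fiberAverage p f k) b = margSnd p k b := by
  classical
  simp only [margSnd, jointP_fiberAverage]
  exact Finset.sum_fiberwise Finset.univ f _

theorem expDist_fiberAverage (d : A' → B → ℝ) :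
    expDist (p.map f) (fiberAverage p f k) d = expDist p k fun a => d (f a) := by
  classical
  simp only [expDist, jointP_fiberAverage]
  rw [← Finset.sum_fiberwise Finset.univ f]
  refine Finset.sum_congr rfl fun a' _ => ?_
  simp only [Finset.sum_mul]
  rw [Finset.sum_comm]
  refine Finset.sum_congr rfl fun a ha => ?_
  rw [(Finset.mem_filter.1 ha).2]

theorem mutualInfo_fiberAverage_le :
    mutualInfo (p.map f) (fiberAverage p f k) ≤ mutualInfo p k := by
  classical
  simp only [mutualInfo, jointP_fiberAverage, margSnd_fiberAverage, toReal_map_apply,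
    Finset.sum_mul]
  rw [Finset.sum_comm, Finset.sum_comm (s := (Finset.univ : Finset A))]
  simp only [← Finset.sum_mul]
  refine Finset.sum_le_sum fun b _ => ?_
  have fiberwise_le := sum_fiberwise_mul_log_div_le f (fun a => jointP_nonneg p k a b)
    (fun a => toReal_mul_margSnd_nonneg p k a b) fun _ => jointP_eq_zero_of_mul_margSnd_eq_zero
  simpa only [Finset.sum_mul] using fiberwise_le

end Source

section Rate

variable [Fintype A] [Fintype B]

theorem rate_eq_of_forall_exists [Fintype A'] [Fintype B'] {p : PMF A} {p' : PMF A'}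
    {d : A → B → ℝ} {d' : A' → B' → ℝ} {D : ℝ}
    (hle : ∀ k : A → PMF B, ∃ k' : A' → PMF B',
      expDist p' k' d' ≤ expDist p k d ∧ mutualInfo p' k' ≤ mutualInfo p k)
    (hge : ∀ k' : A' → PMF B', ∃ k : A → PMF B,
      expDist p k d ≤ expDist p' k' d' ∧ mutualInfo p k ≤ mutualInfo p' k') :
    rate p d D = rate p' d' D := by
  -- This covers the case that no channel meets the constraint: both infima are then `sInf ∅ = 0`.
  refine csInf_eq_csInf_of_forall_exists_le ?_ ?_
  · rintro _ ⟨k, hk, rfl⟩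
    obtain ⟨k', hdist, hinfo⟩ := hle k
    exact ⟨_, ⟨k', hdist.trans hk, rfl⟩, hinfo⟩
  · rintro _ ⟨k', hk', rfl⟩
    obtain ⟨k, hdist, hinfo⟩ := hge k'
    exact ⟨_, ⟨k, hdist.trans hk', rfl⟩, hinfo⟩

theorem rate_comp_source [Fintype A'] (p : PMF A) (f : A → A') (d : A' → B → ℝ) (D : ℝ) :
    rate p (fun a => d (f a)) D = rate (p.map f) d D :=
  rate_eq_of_forall_exists
    (fun k => ⟨fiberAverage p f k, (expDist_fiberAverage p f k d).le,
      mutualInfo_fiberAverage_le p f k⟩)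
    fun k' => ⟨k' ∘ f, (expDist_comp p f k' d).le, (mutualInfo_comp p f k').le⟩

theorem rate_comp_reproduction [Fintype B'] (p : PMF A) {h : B → B'} (hh : Function.Surjective h)
    (d : A → B' → ℝ) (D : ℝ) :
    rate p (fun a b => d a (h b)) D = rate p d D := by
  obtain ⟨s, hs⟩ := hh.hasRightInverse
  refine rate_eq_of_forall_exists
    (fun k => ⟨_, (expDist_map_channel p k h d).le, mutualInfo_map_channel_le p k h⟩)
    fun k' => ⟨fun a => (k' a).map s, ?_, mutualInfo_map_channel_le p k' s⟩
  simp only [expDist_map_channel, hs _, le_refl]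

end Rate

end Channels

/-- With distortion measured at the distillation point Y₂ = g₂(g₁(X)), if
every ŷ₂ lies in the range of g₂ ∘ g₁ and g₂(ŷ₁) lies in the range of g₂ ∘ g₁ for every
ŷ₁, then for every D > 0:
R_{XY₂}(D;Y₂) = R_{Y₂}(D;Y₂) = R_X(D;Y₂) and
R_{XY₁}(D;Y₂) = R_{Y₁}(D;Y₂) = R_{Y₂}(D;Y₂). -/
theorem distillation_point_equal_rates
    {𝒳 𝒴₁ 𝒴₂ : Type*} [Fintype 𝒳] [Fintype 𝒴₁] [Fintype 𝒴₂]
    [Nonempty 𝒳] [Nonempty 𝒴₁] [Nonempty 𝒴₂]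
    (pX : PMF 𝒳) (g₁ : 𝒳 → 𝒴₁) (g₂ : 𝒴₁ → 𝒴₂)
    (dY₂ : 𝒴₂ → 𝒴₂ → ℝ) (hdY₂ : ∀ y y', 0 ≤ dY₂ y y')
    (hr2 : ∀ yhat₂ : 𝒴₂, yhat₂ ∈ Set.range (fun x => g₂ (g₁ x)))
    (hr1 : ∀ yhat₁ : 𝒴₁, g₂ yhat₁ ∈ Set.range (fun x => g₂ (g₁ x)))
    (D : ℝ) (hD : 0 < D) :
    (rate pX (fun x yhat₂ => dY₂ (g₂ (g₁ x)) yhat₂) D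
        = rate ((pX.map g₁).map g₂) dY₂ D ∧
      rate ((pX.map g₁).map g₂) dY₂ D
        = rate pX (fun x xhat => dY₂ (g₂ (g₁ x)) (g₂ (g₁ xhat))) D) ∧
    (rate pX (fun x yhat₁ => dY₂ (g₂ (g₁ x)) (g₂ yhat₁)) D
        = rate (pX.map g₁) (fun y₁ yhat₁ => dY₂ (g₂ y₁) (g₂ yhat₁)) D ∧
      rate (pX.map g₁) (fun y₁ yhat₁ => dY₂ (g₂ y₁) (g₂ yhat₁)) D
        = rate ((pX.map g₁).map g₂) dY₂ D) := by
  have g₂_comp_g₁_surjective : Function.Surjective (g₂ ∘ g₁) := hr2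
  have rate_XY₂ : rate pX (fun x yhat₂ => dY₂ (g₂ (g₁ x)) yhat₂) D
      = rate ((pX.map g₁).map g₂) dY₂ D := by
    rw [PMF.map_comp]
    exact rate_comp_source pX (g₂ ∘ g₁) dY₂ D
  have rate_X := rate_comp_reproduction pX g₂_comp_g₁_surjective (fun x => dY₂ (g₂ (g₁ x))) D
  have rate_XY₁ := rate_comp_source pX g₁ (fun y₁ yhat₁ => dY₂ (g₂ y₁) (g₂ yhat₁)) D
  have rate_Y₁ := (rate_comp_reproduction (pX.map g₁) g₂_comp_g₁_surjective.of_comp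
    (fun y₁ => dY₂ (g₂ y₁)) D).trans (rate_comp_source (pX.map g₁) g₂ dY₂ D)
  exact ⟨⟨rate_XY₂, (rate_X.trans rate_XY₂).symm⟩, rate_XY₁, rate_Y₁⟩
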